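/- arXiv:2011.12573 — 3 statements merged into one kernel-verified Lean document; each statement's English description precedes it below -/
import Mathlib

section
/- Let R be a commutative ring, n ≥ 1, and A an n×n matrix over R. Write c_i for the coefficient of x^i in the characteristic polynomial p_A(x) of A (so c_n = 1). Then for every k with 1 ≤ k ≤ n, one has k·c_{n-k} + Σ_{j=1}^{k} c_{n-k+j}·Tr(A^j) = 0, where Tr denotes the matrix trace. (This is the recursion underlying the Faddeev–Leverrier algorithm, stated in multiplied, division-free form.) -/
/-!
Let `p = ∑ cᵢ X ^ i` be the characteristic polynomial of `A`. Jacobi's formula for the derivative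
of a determinant gives `p' = tr (adj (X - A))`. On the other hand `(X - A) * adj (X - A) = p`, so
`adj (X - A)` is the quotient of `p` by `X - A` among polynomials with matrix coefficients, and by
Horner's scheme its coefficient of `X ^ m` is `∑ i > m, cᵢ A ^ (i - m - 1)`. Hence
`(m + 1) cₘ₊₁ = ∑ i > m, cᵢ tr (A ^ (i - m - 1))`, while the trace of the Cayley–Hamilton theorem
is the same identity for `c₀`: `0 = ∑ i ≥ 0, cᵢ tr (A ^ i)`.
-/

open Finset Matrix Polynomial

section Jacobi

variable {R S ι : Type*} [CommSemiring R] [DecidableEq ι]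

theorem derivation_prod {M : Type*} [CommSemiring S] [Algebra R S] [AddCommMonoid M] [Module R M]
    [Module S M] (D : Derivation R S M) (s : Finset ι) (f : ι → S) :
    D (∏ i ∈ s, f i) = ∑ i ∈ s, (∏ j ∈ s.erase i, f j) • D (f i) := by
  induction s using Finset.induction_on with
  | empty => simp
  | insert a s ha ih =>
    have erase_insert_prod : ∀ i ∈ s,
        ∏ j ∈ (insert a s).erase i, f j = f a * ∏ j ∈ s.erase i, f j := fun i hi => by
      have hai : a ≠ i := fun h => ha (h ▸ hi)
      rw [erase_insert_of_ne hai, prod_insert (fun h => ha (mem_of_mem_erase h))]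
    rw [prod_insert ha, D.leibniz, ih, sum_insert ha, erase_insert ha, smul_sum, add_comm]
    congr 1
    exact sum_congr rfl fun i hi => by rw [erase_insert_prod i hi, mul_smul]

variable [CommRing S] [Algebra R S] (D : Derivation R S S) [Fintype ι]

theorem derivation_det_eq_sum_det_updateCol (M : Matrix ι ι S) :
    D M.det = ∑ i, (M.updateCol i fun j => D (M j i)).det := by
  have prod_updateCol (σ : Equiv.Perm ι) (i : ι) :
      ∏ j, M.updateCol i (fun k => D (M k i)) (σ j) j =
        (∏ j ∈ univ.erase i, M (σ j) j) * D (M (σ i) i) := by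
    rw [← prod_erase_mul univ _ (mem_univ i), updateCol_self]
    congr 1
    exact prod_congr rfl fun j hj => updateCol_ne (ne_of_mem_erase hj)
  simp only [det_apply, map_sum, Units.smul_def, map_zsmul, derivation_prod, prod_updateCol,
    smul_eq_mul, smul_sum]
  exact sum_comm

theorem derivation_det (M : Matrix ι ι S) : D M.det = (M.adjugate * M.map D).trace := by
  rw [derivation_det_eq_sum_det_updateCol]
  refine sum_congr rfl fun i _ => ?_
  rw [← cramer_apply, cramer_eq_adjugate_mulVec]
  rfl

end Jacobi

section Charpoly

variable {R : Type*} [CommRing R] {ι : Type*} [Fintype ι] [DecidableEq ι] (A : Matrix ι ι R)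

theorem charmatrix_map_derivative : A.charmatrix.map derivative = 1 := by
  ext1 i j
  by_cases h : i = j
  · subst h
    simp
  · simp [h, charmatrix_apply_ne]

theorem derivative_charpoly : derivative A.charpoly = A.charmatrix.adjugate.trace := by
  have jacobi := derivation_det (derivative' : Derivation R R[X] R[X]) A.charmatrix
  rwa [show A.charmatrix.map (derivative' : Derivation R R[X] R[X]) = 1 from
    charmatrix_map_derivative A, mul_one] at jacobi

theorem matPolyEquiv_adjugate_charmatrix :
    matPolyEquiv A.charmatrix.adjugate =
      A.charpoly.map (algebraMap R (Matrix ι ι R)) /ₘ (X - C A) := by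
  nontriviality Matrix ι ι R
  refine (div_modByMonic_unique _ 0 (monic_X_sub_C A) ⟨?_, ?_⟩).1.symm
  · rw [zero_add, ← matPolyEquiv_charmatrix, ← map_mul, mul_adjugate, ← charpoly,
      matPolyEquiv_smul_one]
  · simp

theorem coeff_matPolyEquiv_adjugate_charmatrix (m : ℕ) :
    (matPolyEquiv A.charmatrix.adjugate).coeff m =
      ∑ i ∈ Icc (m + 1) A.charpoly.natDegree, A.charpoly.coeff i • A ^ (i - (m + 1)) := by
  nontriviality Matrix ι ι R
  rw [matPolyEquiv_adjugate_charmatrix, coeff_divByMonic_X_sub_C, A.charpoly_monic.natDegree_map]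
  simp only [coeff_map, ← Algebra.commutes, ← Algebra.smul_def]

theorem coeff_trace_eq_trace_coeff (M : Matrix ι ι R[X]) (m : ℕ) :
    M.trace.coeff m = ((matPolyEquiv M).coeff m).trace := by
  simp only [trace, diag_apply, finsetSum_coeff, matPolyEquiv_coeff_apply]

theorem sum_charpoly_coeff_mul_trace_pow :
    ∑ i ∈ range (A.charpoly.natDegree + 1), A.charpoly.coeff i * (A ^ i).trace = 0 := by
  simpa only [aeval_eq_sum_range, trace_sum, trace_smul, smul_eq_mul, trace_zero] using
    congrArg trace A.aeval_self_charpoly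

theorem natCast_mul_charpoly_coeff (m : ℕ) :
    m * A.charpoly.coeff m =
      ∑ i ∈ Icc m A.charpoly.natDegree, A.charpoly.coeff i * (A ^ (i - m)).trace := by
  cases m with
  | zero =>
    rw [Nat.cast_zero, zero_mul, ← sum_charpoly_coeff_mul_trace_pow A, Nat.range_succ_eq_Icc_zero]
    rfl
  | succ m =>
    calc ((m + 1 : ℕ) : R) * A.charpoly.coeff (m + 1)
        = (derivative A.charpoly).coeff m := by rw [coeff_derivative, mul_comm, Nat.cast_succ]
      _ = ((matPolyEquiv A.charmatrix.adjugate).coeff m).trace := by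
        rw [derivative_charpoly, coeff_trace_eq_trace_coeff]
      _ = _ := by
        simp only [coeff_matPolyEquiv_adjugate_charmatrix, trace_sum, trace_smul, smul_eq_mul]

theorem stmt0_general (k : ℕ) (hk : k ≤ Fintype.card ι) :
    (k : R) * A.charpoly.coeff (Fintype.card ι - k)
      + ∑ j ∈ Icc 1 k, A.charpoly.coeff (Fintype.card ι - k + j) * (A ^ j).trace = 0 := by
  nontriviality R
  obtain ⟨m, hm⟩ := Nat.exists_eq_add_of_le' hk
  have newton : (m : R) * A.charpoly.coeff m =
      A.charpoly.coeff m * (m + k)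
        + ∑ j ∈ Icc 1 k, A.charpoly.coeff (m + j) * (A ^ j).trace :=
    calc (m : R) * A.charpoly.coeff m
        = ∑ i ∈ Icc m (m + k), A.charpoly.coeff i * (A ^ (i - m)).trace := by
          rw [natCast_mul_charpoly_coeff, charpoly_natDegree_eq_dim, hm]
      _ = ∑ j ∈ Icc 0 k, A.charpoly.coeff (m + j) * (A ^ j).trace := by
          simpa using sum_map (Icc 0 k) (addLeftEmbedding m)
            fun i => A.charpoly.coeff i * (A ^ (i - m)).trace
      _ = _ := by
          rw [← add_sum_Ioc_eq_sum_Icc k.zero_le, ← Icc_succ_left_eq_Ioc, add_zero, pow_zero,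
            trace_one, hm, Nat.cast_add]
          rfl
  rw [hm, Nat.add_sub_cancel]
  linear_combination -newton

end Charpoly

theorem stmt0 {R : Type*} [CommRing R] {n : ℕ} (hn : 1 ≤ n)
    (A : Matrix (Fin n) (Fin n) R) :
    ∀ k, 1 ≤ k → k ≤ n →
      (k : R) * A.charpoly.coeff (n - k)
        + ∑ j ∈ Finset.Icc 1 k, A.charpoly.coeff (n - k + j) * Matrix.trace (A ^ j) = 0 := by
  intro k _ hk
  simpa only [Fintype.card_fin] using stmt0_general A k (by rwa [Fintype.card_fin])
end

section
/- Let R be a commutative ring, n ≥ 1, and A an n×n matrix over R with characteristic polynomial coefficients c_i and Faddeev–Leverrier matrices B_k (B_0 = I, B_k = A·B_{k-1} + c_{n-k}·I). Then the adjugate matrix of A satisfies adj(A) = (−1)^{n+1}·B_{n−1}; equivalently, adj(A) = (−1)^{n+1}·Σ_{j=0}^{n−1} c_{j+1}·A^j. -/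
noncomputable def flSeq {R : Type*} [CommRing R] {n : ℕ}
    (A : Matrix (Fin n) (Fin n) R) : ℕ → Matrix (Fin n) (Fin n) R
  | 0 => 1
  | k + 1 => A * flSeq A k + (A.charpoly.coeff (n - (k + 1))) • 1

/-!
Over the noncommutative ring of matrices, `adj(X - A)` is the quotient of the characteristic
polynomial by `X - A`. Synthetic division computes its coefficients from the top down, and its
recurrence is the Faddeev–Leverrier one. The last coefficient is the value at `X = 0`,
namely `adj(-A)`.
-/

section

open Polynomial

variable {R ι : Type*} [CommRing R] [Fintype ι] [DecidableEq ι]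

theorem charpoly_coeff_card (A : Matrix ι ι R) : A.charpoly.coeff (Fintype.card ι) = 1 := by
  nontriviality R
  simpa only [A.charpoly_natDegree_eq_dim] using A.charpoly_monic.coeff_natDegree

theorem adjugate_neg (A : Matrix ι ι R) :
    (-A).adjugate = (-1 : R) ^ (Fintype.card ι + 1) • A.adjugate := by
  cases isEmpty_or_nonempty ι
  · exact Subsingleton.elim _ _
  · have card_succ : Fintype.card ι + 1 = Fintype.card ι - 1 + 2 := by
      have := Fintype.card_pos (α := ι)
      omega
    rw [← neg_one_smul R A, Matrix.adjugate_smul, card_succ, pow_add, neg_one_sq, mul_one]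

/-- The adjugate of `X - A`, regarded as a polynomial with matrix coefficients so that it can be
divided by `X - A` and its coefficients compared with the Faddeev–Leverrier matrices. -/
noncomputable def adjugatePoly (A : Matrix ι ι R) : (Matrix ι ι R)[X] :=
  matPolyEquiv A.charmatrix.adjugate

theorem X_sub_C_mul_adjugatePoly (A : Matrix ι ι R) :
    (X - C A) * adjugatePoly A = A.charpoly.map (algebraMap R (Matrix ι ι R)) := by
  rw [adjugatePoly, ← Matrix.matPolyEquiv_charmatrix, ← map_mul, Matrix.mul_adjugate,
    ← Matrix.charpoly, matPolyEquiv_smul_one]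

theorem adjugatePoly_eq_divByMonic (A : Matrix ι ι R) :
    adjugatePoly A = A.charpoly.map (algebraMap R (Matrix ι ι R)) /ₘ (X - C A) := by
  rw [← X_sub_C_mul_adjugatePoly, mul_divByMonic_cancel_left _ (monic_X_sub_C A)]

theorem adjugatePoly_coeff_rec (A : Matrix ι ι R) (k : ℕ) :
    (adjugatePoly A).coeff k =
      A * (adjugatePoly A).coeff (k + 1) + A.charpoly.coeff (k + 1) • 1 := by
  rw [adjugatePoly_eq_divByMonic, coeff_divByMonic_X_sub_C_rec, coeff_map,
    Algebra.algebraMap_eq_smul_one, add_comm]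

theorem adjugatePoly_coeff (A : Matrix ι ι R) (k : ℕ) :
    (adjugatePoly A).coeff k =
      ∑ j ∈ Finset.range (Fintype.card ι - k), A.charpoly.coeff (k + 1 + j) • A ^ j := by
  nontriviality R
  cases isEmpty_or_nonempty ι
  · exact Subsingleton.elim _ _
  have natDegree_map :
      (A.charpoly.map (algebraMap R (Matrix ι ι R))).natDegree = Fintype.card ι := by
    rw [A.charpoly_monic.natDegree_map, A.charpoly_natDegree_eq_dim]
  rw [adjugatePoly_eq_divByMonic, coeff_divByMonic_X_sub_C, natDegree_map,
    ← Finset.Ico_add_one_right_eq_Icc, Finset.sum_Ico_eq_sum_range, Nat.add_sub_add_right]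
  simp only [coeff_map, add_tsub_cancel_left, Algebra.algebraMap_eq_smul_one, mul_smul_comm,
    mul_one]

theorem adjugatePoly_coeff_zero (A : Matrix ι ι R) :
    (adjugatePoly A).coeff 0 = (-A).adjugate := by
  have charmatrix_eval_zero : (evalRingHom (0 : R)).mapMatrix A.charmatrix = -A := by
    ext i j
    rcases eq_or_ne i j with rfl | hij
    · simp
    · simp [hij]
  rw [← charmatrix_eval_zero, ← RingHom.map_adjugate]
  ext i j
  simp [adjugatePoly, matPolyEquiv_coeff_apply, coeff_zero_eq_eval_zero]

theorem adjugate_eq_adjugatePoly_coeff_zero (A : Matrix ι ι R) :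
    A.adjugate = (-1 : R) ^ (Fintype.card ι + 1) • (adjugatePoly A).coeff 0 := by
  rw [adjugatePoly_coeff_zero, ← adjugate_neg, neg_neg]

end

theorem flSeq_eq_adjugatePoly_coeff {R : Type*} [CommRing R] {n k m : ℕ}
    (A : Matrix (Fin n) (Fin n) R) (h : k + m + 1 = n) :
    flSeq A k = (adjugatePoly A).coeff m := by
  induction k generalizing m with
  | zero =>
    have card_eq : m + 1 = Fintype.card (Fin n) := by rw [Fintype.card_fin]; omega
    rw [flSeq, adjugatePoly_coeff, ← card_eq, Nat.add_sub_cancel_left, Finset.sum_range_one,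
      add_zero, card_eq, charpoly_coeff_card, one_smul, pow_zero]
  | succ k ih =>
    rw [flSeq, ih (m := m + 1) (by omega), show n - (k + 1) = m + 1 by omega,
      ← adjugatePoly_coeff_rec]

theorem stmt5 {R : Type*} [CommRing R] {n : ℕ} (hn : 1 ≤ n)
    (A : Matrix (Fin n) (Fin n) R) :
    A.adjugate = ((-1 : R) ^ (n + 1)) • flSeq A (n - 1) ∧
      A.adjugate = ((-1 : R) ^ (n + 1)) •
        ∑ j ∈ Finset.range n, A.charpoly.coeff (j + 1) • A ^ j := by
  have adjugate_eq : A.adjugate = (-1 : R) ^ (n + 1) • (adjugatePoly A).coeff 0 := by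
    simpa only [Fintype.card_fin] using adjugate_eq_adjugatePoly_coeff_zero A
  constructor
  · rwa [flSeq_eq_adjugatePoly_coeff A (m := 0) (by omega)]
  · simpa only [adjugatePoly_coeff, Fintype.card_fin, Nat.sub_zero, zero_add, add_comm 1]
      using adjugate_eq
end

section
/- Let R be a commutative ring, n ≥ 1, and A an n×n matrix over R with characteristic polynomial coefficients c_i and Faddeev–Leverrier matrices B_k (B_0 = I, B_k = A·B_{k-1} + c_{n-k}·I). Then Tr(A·B_{n−1}) = −n·c_0; equivalently, Tr(A·B_{n−1}) = (−1)^{n+1}·n·det(A). -/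
/-!
The recursion for `flSeq A` is Horner's scheme for evaluating the characteristic polynomial at `A`:
its `k`-th stage is the value at `A` of the polynomial left after deleting the `n - k` lowest
coefficients. The last stage vanishes by the Cayley–Hamilton theorem, and the last step of the
scheme then says that `A * flSeq A (n - 1)` is the scalar matrix `-c₀`.
-/

open Polynomial

section DivX

variable {R S : Type*}

theorem coeff_divX_iterate [Semiring R] (p : R[X]) (m i : ℕ) :
    (divX^[m] p).coeff i = p.coeff (i + m) := by
  induction m generalizing i with
  | zero => rfl
  | succ m ih => rw [Function.iterate_succ_apply', coeff_divX, ih, add_right_comm, add_assoc]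

theorem divX_iterate_natDegree [Semiring R] (p : R[X]) :
    divX^[p.natDegree] p = C p.leadingCoeff := by
  ext i
  rw [coeff_divX_iterate, coeff_C]
  split_ifs with hi
  · rw [hi, zero_add, coeff_natDegree]
  · exact coeff_eq_zero_of_natDegree_lt (by lia)

theorem aeval_divX_iterate [CommSemiring R] [Semiring S] [Algebra R S] (p : R[X]) (a : S) (m : ℕ) :
    aeval a (divX^[m] p) = a * aeval a (divX^[m + 1] p) + p.coeff m • 1 := by
  calc aeval a (divX^[m] p)
      = aeval a (X * (divX^[m] p).divX + C ((divX^[m] p).coeff 0)) := by rw [X_mul_divX_add]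
    _ = a * aeval a (divX^[m + 1] p) + p.coeff m • 1 := by
      rw [← Function.iterate_succ_apply' divX, coeff_divX_iterate, zero_add, map_add, map_mul,
        aeval_X, aeval_C, Algebra.algebraMap_eq_smul_one]

end DivX

section FaddeevLeVerrier

variable {R : Type*} [CommRing R] {n : ℕ}

theorem flSeq_eq_aeval_divX_iterate (A : Matrix (Fin n) (Fin n) R) {k : ℕ} (hk : k ≤ n) :
    flSeq A k = aeval A (divX^[n - k] A.charpoly) := by
  nontriviality R
  induction k with
  | zero =>
    have hdeg : A.charpoly.natDegree = n := by
      rw [A.charpoly_natDegree_eq_dim, Fintype.card_fin]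
    have htop : divX^[n] A.charpoly = 1 := by
      simpa only [hdeg, A.charpoly_monic.leadingCoeff, C_1] using divX_iterate_natDegree A.charpoly
    rw [flSeq, Nat.sub_zero, htop, map_one]
  | succ k ih =>
    have hstep : n - (k + 1) + 1 = n - k := by lia
    rw [flSeq, ih (by lia), aeval_divX_iterate _ _ (n - (k + 1)), hstep]

theorem flSeq_self_eq_zero (A : Matrix (Fin n) (Fin n) R) : flSeq A n = 0 := by
  rw [flSeq_eq_aeval_divX_iterate A le_rfl, Nat.sub_self, Function.iterate_zero_apply,
    A.aeval_self_charpoly]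

theorem mul_flSeq_eq_neg_smul_one (A : Matrix (Fin (n + 1)) (Fin (n + 1)) R) :
    A * flSeq A n = -(A.charpoly.coeff 0 • 1) := by
  have hlast := flSeq_self_eq_zero A
  rw [flSeq, Nat.sub_self] at hlast
  exact eq_neg_of_add_eq_zero_left hlast

theorem trace_mul_flSeq (A : Matrix (Fin (n + 1)) (Fin (n + 1)) R) :
    (A * flSeq A n).trace = -(((n + 1 : ℕ) : R) * A.charpoly.coeff 0) := by
  rw [mul_flSeq_eq_neg_smul_one, Matrix.trace_neg, Matrix.trace_smul, Matrix.trace_one,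
    Fintype.card_fin, smul_eq_mul, mul_comm]

end FaddeevLeVerrier

theorem charpoly_coeff_zero_eq_neg_one_pow_mul_det {R ι : Type*} [CommRing R] [Fintype ι]
    [DecidableEq ι] (A : Matrix ι ι R) :
    A.charpoly.coeff 0 = (-1) ^ Fintype.card ι * A.det := by
  rw [A.det_eq_sign_charpoly_coeff, ← mul_assoc, ← mul_pow, neg_one_mul, neg_neg, one_pow, one_mul]

theorem stmt6 {R : Type*} [CommRing R] {n : ℕ} (hn : 1 ≤ n)
    (A : Matrix (Fin n) (Fin n) R) :
    Matrix.trace (A * flSeq A (n - 1)) = -((n : R) * A.charpoly.coeff 0) ∧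
      Matrix.trace (A * flSeq A (n - 1)) = (-1 : R) ^ (n + 1) * (n : R) * A.det := by
  have htrace : Matrix.trace (A * flSeq A (n - 1)) = -((n : R) * A.charpoly.coeff 0) := by
    obtain ⟨m, rfl⟩ := Nat.exists_eq_add_of_le' hn
    exact trace_mul_flSeq A
  refine ⟨htrace, ?_⟩
  rw [htrace, charpoly_coeff_zero_eq_neg_one_pow_mul_det, Fintype.card_fin]
  ring
end
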